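/- The expected number of (VarShift)-redexes in a uniformly random λυ-term of size n satisfies E(X_n)/n → 1/64, where a (VarShift)-redex is a subterm of the form m[↑] for a de Bruijn index m. -/

import Mathlib

open Finset Filter

mutual
inductive Tm : Type
  | idx : Nat → Tm
  | lam : Tm → Tm
  | app : Tm → Tm → Tm
  | clos : Tm → Subst → Tm
inductive Subst : Type
  | slash : Tm → Subst
  | lift : Subst → Subst
  | shift : Subst
end

mutual
/-- Natural size of a λυ-term: every constructor weighs 1; index n has size n+1. -/
def Tm.size : Tm → Nat
  | .idx n => n + 1
  | .lam a => Tm.size a + 1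
  | .app a b => Tm.size a + Tm.size b + 1
  | .clos a s => Tm.size a + Subst.size s + 1
/-- Natural size of an explicit substitution. -/
def Subst.size : Subst → Nat
  | .slash a => Tm.size a + 1
  | .lift s => Subst.size s + 1
  | .shift => 1
end

/-- Number of λυ-terms of size `n`. -/
noncomputable def tcount (n : ℕ) : ℕ := Nat.card {a : Tm // Tm.size a = n}

/-- Number of explicit substitutions of size `n`. -/
noncomputable def scount (n : ℕ) : ℕ := Nat.card {s : Subst // Subst.size s = n}

/-- Expected value of the statistic `f` on a uniformly random λυ-term of size `n`
(the statistic is assumed to be bounded by the size, so summing `k` up to `n` suffices). -/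
noncomputable def expectTm (f : Tm → ℕ) (n : ℕ) : ℝ :=
  (∑ k ∈ Finset.range (n + 1),
      (k : ℝ) * (Nat.card {a : Tm // Tm.size a = n ∧ f a = k} : ℝ)) / (tcount n : ℝ)

mutual
/-- Number of (varShift)-redexes occurring in a λυ-term. -/
def Tm.varShiftCount : Tm → ℕ
  | .idx _ => 0
  | .lam a => Tm.varShiftCount a
  | .app a b => Tm.varShiftCount a + Tm.varShiftCount b
  | .clos (.idx _) .shift => 1
  | .clos a s => Tm.varShiftCount a + Subst.varShiftCount s
/-- Number of (varShift)-redexes occurring in a substitution. -/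
def Subst.varShiftCount : Subst → ℕ
  | .slash a => Tm.varShiftCount a
  | .lift s => Subst.varShiftCount s
  | .shift => 0
end

namespace VS
open PowerSeries

attribute [local instance] Classical.propDecidable

theorem tm_size_pos (a : Tm) : 0 < a.size := by cases a <;> simp [Tm.size]
theorem subst_size_pos (s : Subst) : 0 < s.size := by cases s <;> simp [Subst.size]

theorem finite_le (n : ℕ) :
    {a : Tm | a.size ≤ n}.Finite ∧ {s : Subst | s.size ≤ n}.Finite := by
  induction n with
  | zero =>
    constructor
    · convert Set.finite_empty
      ext a; simpa using (tm_size_pos a).ne'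
    · convert Set.finite_empty
      ext a; simpa using (subst_size_pos a).ne'
  | succ n ih =>
    obtain ⟨hT, hS⟩ := ih
    constructor
    · refine ((((Set.finite_Iic n).image Tm.idx).union (hT.image Tm.lam)).union
        (((hT.prod hT).image (fun p => Tm.app p.1 p.2)).union
          ((hT.prod hS).image (fun p => Tm.clos p.1 p.2)))).subset ?_
      intro a ha
      cases a <;> simp [Tm.size] at ha ⊢ <;> omega
    · refine (((hT.image Subst.slash).union (hS.image Subst.lift)).union
        (Set.finite_singleton Subst.shift)).subset ?_
      intro a ha
      cases a <;> simp [Subst.size] at ha ⊢ <;> omega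

theorem finite_T (n : ℕ) : {a : Tm | a.size = n}.Finite :=
  (finite_le n).1.subset (fun a ha => le_of_eq ha)
theorem finite_S (n : ℕ) : {a : Subst | a.size = n}.Finite :=
  (finite_le n).2.subset (fun a ha => le_of_eq ha)

noncomputable def TF (n : ℕ) : Finset Tm := (finite_T n).toFinset
noncomputable def SF (n : ℕ) : Finset Subst := (finite_S n).toFinset

@[simp] theorem mem_TF {n : ℕ} {a : Tm} : a ∈ TF n ↔ a.size = n := by simp [TF]
@[simp] theorem mem_SF {n : ℕ} {a : Subst} : a ∈ SF n ↔ a.size = n := by simp [SF]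

theorem TF_zero : TF 0 = ∅ := by
  ext a; simpa using (tm_size_pos a).ne'
theorem SF_zero : SF 0 = ∅ := by
  ext a; simpa using (subst_size_pos a).ne'

noncomputable def appF (n : ℕ) : Finset Tm :=
  (antidiagonal n).biUnion fun p => (TF p.1 ×ˢ TF p.2).image fun q => Tm.app q.1 q.2
noncomputable def closF (n : ℕ) : Finset Tm :=
  (antidiagonal n).biUnion fun p => (TF p.1 ×ˢ SF p.2).image fun q => Tm.clos q.1 q.2

theorem sum_appF (n : ℕ) (g : Tm → ℝ) : ∑ a ∈ appF n, g a =
    ∑ p ∈ antidiagonal n, ∑ a ∈ TF p.1, ∑ b ∈ TF p.2, g (.app a b) := by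
  unfold appF
  rw [sum_biUnion]
  · refine sum_congr rfl fun p _ => ?_
    rw [sum_image, sum_product]
    rintro ⟨a, b⟩ _ ⟨c, d⟩ _ h
    simpa using h
  · rintro ⟨i, j⟩ _ ⟨k, l⟩ _ hne
    simp only [Function.onFun]
    rw [Finset.disjoint_left]
    rintro x hx hy
    simp only [mem_image, mem_product, mem_TF, Prod.exists] at hx hy
    obtain ⟨a, b, ⟨h1, h2⟩, rfl⟩ := hx
    obtain ⟨c, d, ⟨h3, h4⟩, h5⟩ := hy
    injection h5 with h6 h7
    subst h6 h7
    apply hne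
    simp [← h1, ← h2, ← h3, ← h4]

theorem sum_closF (n : ℕ) (g : Tm → ℝ) : ∑ a ∈ closF n, g a =
    ∑ p ∈ antidiagonal n, ∑ a ∈ TF p.1, ∑ b ∈ SF p.2, g (.clos a b) := by
  unfold closF
  rw [sum_biUnion]
  · refine sum_congr rfl fun p _ => ?_
    rw [sum_image, sum_product]
    rintro ⟨a, b⟩ _ ⟨c, d⟩ _ h
    simpa using h
  · rintro ⟨i, j⟩ _ ⟨k, l⟩ _ hne
    simp only [Function.onFun]
    rw [Finset.disjoint_left]
    rintro x hx hy
    simp only [mem_image, mem_product, mem_TF, mem_SF, Prod.exists] at hx hy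
    obtain ⟨a, b, ⟨h1, h2⟩, rfl⟩ := hx
    obtain ⟨c, d, ⟨h3, h4⟩, h5⟩ := hy
    injection h5 with h6 h7
    subst h6 h7
    apply hne
    simp [← h1, ← h2, ← h3, ← h4]

theorem sum_TF_succ (n : ℕ) (g : Tm → ℝ) : ∑ a ∈ TF (n+1), g a =
    g (.idx n) + ∑ a ∈ TF n, g (.lam a)
    + ∑ p ∈ antidiagonal n, ∑ a ∈ TF p.1, ∑ b ∈ TF p.2, g (.app a b)
    + ∑ p ∈ antidiagonal n, ∑ a ∈ TF p.1, ∑ b ∈ SF p.2, g (.clos a b) := by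
  have h : TF (n+1) = (({Tm.idx n} ∪ (TF n).image Tm.lam) ∪ appF n) ∪ closF n := by
    ext a
    cases a <;> simp [Tm.size, appF, closF]
  rw [h, sum_union, sum_union, sum_union, sum_appF, sum_closF, sum_singleton, sum_image]
  · intro a _ b _ h; simpa using h
  all_goals
    rw [Finset.disjoint_left]
    intro a
    cases a <;> simp [appF, closF]

theorem sum_SF_succ (n : ℕ) (g : Subst → ℝ) : ∑ a ∈ SF (n+1), g a =
    ∑ a ∈ TF n, g (.slash a) + ∑ a ∈ SF n, g (.lift a) + if n = 0 then g .shift else 0 := by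
  have h : SF (n+1) = ((TF n).image Subst.slash ∪ (SF n).image Subst.lift)
      ∪ (if n = 0 then {Subst.shift} else ∅) := by
    ext a
    by_cases hn : n = 0
    · cases a <;> simp [Subst.size, hn]
    · cases a <;> simp [Subst.size, hn]
  rw [h, sum_union, sum_union, sum_image, sum_image]
  · split_ifs <;> simp
  · intro a _ b _ h; simpa using h
  · intro a _ b _ h; simpa using h
  all_goals
    rw [Finset.disjoint_left]
    intro a
    by_cases hn : n = 0 <;> cases a <;> simp [hn]

/-- indicator of indices -/
def iT : Tm → ℝ
  | .idx _ => 1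
  | _ => 0
/-- indicator of shift -/
def iS : Subst → ℝ
  | .shift => 1
  | _ => 0

theorem count_clos (a : Tm) (s : Subst) : ((Tm.clos a s).varShiftCount : ℝ) =
    a.varShiftCount + s.varShiftCount + iT a * iS s := by
  cases a <;> cases s <;> simp [Tm.varShiftCount, Subst.varShiftCount, iT, iS]

mutual
theorem tm_le : ∀ a : Tm, a.varShiftCount ≤ a.size
  | .idx _ => by simp [Tm.varShiftCount]
  | .lam a => by have := tm_le a; simp [Tm.varShiftCount, Tm.size]; omega
  | .app a b => by have := tm_le a; have := tm_le b; simp [Tm.varShiftCount, Tm.size]; omega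
  | .clos a s => by
    have h1 := tm_le a
    have h2 := subst_le s
    cases a <;> cases s <;> simp [Tm.varShiftCount, Subst.varShiftCount, Tm.size, Subst.size] at * <;> omega
theorem subst_le : ∀ a : Subst, a.varShiftCount ≤ a.size
  | .slash a => by have := tm_le a; simp [Subst.varShiftCount, Subst.size]; omega
  | .lift a => by have := subst_le a; simp [Subst.varShiftCount, Subst.size]; omega
  | .shift => by simp [Subst.varShiftCount]
end

noncomputable def T : PowerSeries ℝ := mk fun n => ∑ _a ∈ TF n, (1:ℝ)
noncomputable def S : PowerSeries ℝ := mk fun n => ∑ _a ∈ SF n, (1:ℝ)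
noncomputable def D : PowerSeries ℝ := mk fun n => ∑ a ∈ TF n, (a.varShiftCount:ℝ)
noncomputable def E : PowerSeries ℝ := mk fun n => ∑ a ∈ SF n, (a.varShiftCount:ℝ)
noncomputable def P : PowerSeries ℝ := mk fun n => ∑ a ∈ TF n, iT a
noncomputable def Q : PowerSeries ℝ := mk fun n => ∑ a ∈ SF n, iS a
noncomputable def N : PowerSeries ℝ := mk fun _ => 1

theorem hN : N * (1 - X) = 1 := by
  exact PowerSeries.mk_one_mul_one_sub_eq_one ℝ

theorem hP : P = X * N := by
  ext n
  cases n with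
  | zero => simp [P, TF_zero]
  | succ n =>
    rw [coeff_succ_X_mul]
    simp [P, N, sum_TF_succ, iT]

theorem hQ : Q = X := by
  ext n
  cases n with
  | zero => simp [Q, SF_zero]
  | succ n =>
    simp [Q, sum_SF_succ, iS, coeff_X]

theorem hT : T = X * (N + T + T * T + T * S) := by
  ext n
  cases n with
  | zero => simp [T, TF_zero]
  | succ n =>
    rw [coeff_succ_X_mul]
    simp only [T, S, N, map_add, coeff_mul, coeff_mk]
    rw [sum_TF_succ]
    simp only [sum_mul_sum, mul_one]

theorem hS : S = X * (T + S + 1) := by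
  ext n
  cases n with
  | zero => simp [S, SF_zero]
  | succ n =>
    rw [coeff_succ_X_mul]
    simp only [T, S, map_add, coeff_mk, coeff_one]
    rw [sum_SF_succ]

theorem hE : E = X * (D + E) := by
  ext n
  cases n with
  | zero => simp [E, SF_zero]
  | succ n =>
    rw [coeff_succ_X_mul]
    simp only [D, E, map_add, coeff_mk]
    rw [sum_SF_succ]
    simp [Subst.varShiftCount]

theorem hD : D = X * (D + (D * T + T * D) + (D * S + T * E + P * Q)) := by
  ext n
  cases n with
  | zero => simp [D, TF_zero]
  | succ n =>
    rw [coeff_succ_X_mul]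
    simp only [D, T, S, E, P, Q, map_add, coeff_mul, coeff_mk]
    rw [sum_TF_succ]
    simp only [sum_mul_sum, mul_one, one_mul, count_clos, ← sum_add_distrib]
    simp [Tm.varShiftCount]

theorem T_eq : 1 + T = 1 + X * (1 + T) ^ 2 := by
  linear_combination (1 - X) * hT + X * T * hS + X * hN

theorem D_eq : D * (1 - 2 * X * (1 + T)) = X ^ 3 := by
  have h := hD
  rw [hP, hQ] at h
  linear_combination (1 - X) * h + X * T * hE + X * D * hS + X ^ 3 * hN

noncomputable def K : PowerSeries ℝ := mk fun n => (catalan n : ℝ)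
noncomputable def B : PowerSeries ℝ := mk fun n => (n.centralBinom : ℝ)

theorem K_eq : K = 1 + X * K ^ 2 := by
  have h := congrArg (PowerSeries.map (Nat.castRingHom ℝ)) catalanSeries_sq_mul_X_add_one
  have h2 : PowerSeries.map (Nat.castRingHom ℝ) catalanSeries = K := by
    ext n; simp [K]
  simp only [map_add, map_mul, map_pow, h2, PowerSeries.map_X, map_one] at h
  linear_combination -h

theorem T_K : 1 + T = K := by
  have h : (1 + T - K) * (1 - X * (1 + T + K)) = 0 := by
    linear_combination T_eq - K_eq
  refine sub_eq_zero.mp ((mul_eq_zero.mp h).resolve_right ?_)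
  intro h0
  have := congrArg (constantCoeff (R := ℝ)) h0
  simp at this

theorem B_K : B = K + X * (d⁄dX ℝ K) := by
  ext n
  rw [map_add]
  cases n with
  | zero => simp [B, K]
  | succ n =>
    rw [coeff_succ_X_mul, coeff_derivative]
    simp only [B, K, coeff_mk, ← succ_mul_catalan_eq_centralBinom]
    push_cast
    ring

theorem B_eq : B * (1 - 2 * X * K) = 1 := by
  have h := congrArg (d⁄dX ℝ) K_eq
  simp only [map_add, Derivation.leibniz, Derivation.leibniz_pow, derivative_X, smul_eq_mul,
    Derivation.map_one_eq_zero] at h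
  rw [B_K]
  simp at h
  linear_combination X * h + K_eq

theorem D_B : D = X ^ 3 * B := by
  have h := D_eq
  rw [T_K] at h
  linear_combination B * h - D * B_eq

theorem tcount_eq (n : ℕ) (hn : 0 < n) : (tcount n : ℝ) = catalan n := by
  have h := congrArg (coeff n) T_K
  simp only [map_add, coeff_one, hn.ne', if_false, zero_add, T, K, coeff_mk] at h
  rw [← h, tcount]
  have : Nat.card {a : Tm // a.size = n} = (TF n).card :=
    Nat.subtype_card (TF n) (fun a => mem_TF)
  simp [this]

theorem num_eq (n : ℕ) : ∑ k ∈ Finset.range (n + 1),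
    (k : ℝ) * (Nat.card {a : Tm // Tm.size a = n ∧ a.varShiftCount = k} : ℝ) =
    ∑ a ∈ TF n, (a.varShiftCount : ℝ) := by
  have hm : ∀ a ∈ TF n, a.varShiftCount ∈ range (n + 1) := by
    intro a ha
    have := tm_le a
    simp at ha ⊢
    omega
  rw [← sum_fiberwise_of_maps_to hm]
  refine sum_congr rfl fun k _ => ?_
  have : Nat.card {a : Tm // a.size = n ∧ a.varShiftCount = k} =
      ((TF n).filter fun a => a.varShiftCount = k).card :=
    Nat.subtype_card _ (fun a => by simp)
  rw [this, sum_congr rfl (g := fun _ => (k:ℝ)) (by intro a ha; simp at ha; simp [ha.2])]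
  simp [mul_comm]

theorem expect_eq (m : ℕ) : expectTm Tm.varShiftCount (m + 3) / ((m + 3 : ℕ) : ℝ) =
    ((m:ℝ)+1)*(m+2)*(m+4)/(8*(2*m+1)*(2*m+3)*(2*m+5)) := by
  have h := congrArg (coeff (m+3)) D_B
  rw [coeff_X_pow_mul] at h
  simp only [D, B, coeff_mk] at h
  rw [expectTm, num_eq, h, tcount_eq _ (by omega)]
  have h0 := succ_mul_catalan_eq_centralBinom (m+3)
  have h1 := Nat.succ_mul_centralBinom_succ m
  have h2 := Nat.succ_mul_centralBinom_succ (m+1)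
  have h3 := Nat.succ_mul_centralBinom_succ (m+2)
  have hp : (0:ℝ) < m.centralBinom := by exact_mod_cast m.centralBinom_pos
  have e : ((m:ℝ)+1)*(m+2)*(m+3)*(m+4) * catalan (m+3) =
      8*(2*m+1)*(2*m+3)*(2*m+5) * m.centralBinom := by
    have h0' : ((m:ℝ)+3+1) * catalan (m+3) = (m+3).centralBinom := by exact_mod_cast h0
    have h1' : ((m:ℝ)+1) * (m+1).centralBinom = 2*(2*m+1)*m.centralBinom := by exact_mod_cast h1
    have h2' : ((m:ℝ)+1+1) * (m+2).centralBinom = 2*(2*(m+1)+1)*(m+1).centralBinom := by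
      exact_mod_cast h2
    have h3' : ((m:ℝ)+2+1) * (m+3).centralBinom = 2*(2*(m+2)+1)*(m+2).centralBinom := by
      exact_mod_cast h3
    linear_combination ((m:ℝ)+1)*(m+2)*(m+3) * h0' + ((m:ℝ)+1)*(m+2) * h3'
      + ((m:ℝ)+1)*2*(2*m+5) * h2' + 4*(2*m+5)*(2*m+3)*h1'
  have hc : (0:ℝ) < catalan (m+3) := by
    by_contra hcon
    have : (catalan (m+3) : ℝ) = 0 := le_antisymm (not_lt.mp hcon) (Nat.cast_nonneg _)
    rw [this, mul_zero] at e
    have : (0:ℝ) < 8*(2*m+1)*(2*m+3)*(2*m+5) * m.centralBinom := by positivity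
    linarith
  push_cast
  rw [div_div, div_eq_div_iff (by positivity) (by positivity)]
  linear_combination -e

theorem lim : Tendsto (fun m : ℕ => ((m:ℝ)+1)*(m+2)*(m+4)/(8*(2*m+1)*(2*m+3)*(2*m+5)))
    atTop (nhds (1/64)) := by
  have hi : Tendsto (fun m : ℕ => ((m:ℝ))⁻¹) atTop (nhds 0) := tendsto_inv_atTop_nhds_zero_nat
  have hc : ContinuousAt (fun x : ℝ => (1+x)*(1+2*x)*(1+4*x)/(8*(2+x)*(2+3*x)*(2+5*x))) 0 := by
    apply ContinuousAt.div
    · fun_prop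
    · fun_prop
    · norm_num
  have := hc.tendsto.comp hi
  norm_num at this
  refine (this.congr' ?_)
  filter_upwards [eventually_gt_atTop 0] with m hm
  have : (0:ℝ) < m := by exact_mod_cast hm
  simp only [Function.comp]
  field_simp

end VS

/-- the expected number of (VarShift)-redexes (subterms m[↑] for an index m)
per size n tends to 1/64. -/
theorem stmt17 :
    Tendsto (fun n : ℕ => expectTm Tm.varShiftCount n / (n : ℝ)) atTop (nhds (1 / 64)) := by
  rw [← tendsto_add_atTop_iff_nat 3]
  simp only [VS.expect_eq]
  exact VS.lim
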